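/- (Corollary 5.4: single-expert two-stage excess error bound, general Γ.) Assume there exist α ∈ (0,1] and β > 0 such that for every probability measure ν on X×{−1,+1} and every measurable r : X → ℝ, E_{ℓ01}(r) − E*_{ℓ01} ≤ β·(E_Φ(r) − E*_Φ)^α. Then for every probability measure μ on X×ℝ, every measurable predictor h : X → ℝ and every measurable rejection function r : X → ℝ, E_{ℓ_def}(h,r) − E*_{ℓ_def} ≤ (E_L(h) − inf_{h' measurable} E_L(h')) + (l̄ + c̄)^{1−α}·β·(E_{ℓ^h_Φ}(r) − inf_{r' measurable} E_{ℓ^h_Φ}(r'))^α, where E_L(h) = ∫ L(h(x),y) dμ(x,y) and ℓ^h_Φ(r,x,y) = c(x,y)·Φ(r(x)) + L(h(x),y)·Φ(−r(x)) with h fixed. -/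

import Mathlib

open MeasureTheory ENNReal

/-- The binary label space `{−1, +1} ⊆ ℝ`. -/
def PMOne : Set ℝ := {-1, 1}

/-- `sign(u) = +1` if `u > 0` and `−1` otherwise. -/
noncomputable def sgn (u : ℝ) : ℝ := if 0 < u then 1 else -1

/-- The deferral (abstention) loss
`ℓ_def(h,r,x,y) = L(h(x),y)·1_{r(x)>0} + c(x,y)·1_{r(x)≤0}`. -/
noncomputable def absLoss {X : Type*} (L : ℝ → ℝ → ℝ) (c : X × ℝ → ℝ)
    (h : X → ℝ) (r : X → ℝ) (z : X × ℝ) : ℝ :=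
  (if 0 < r z.1 then L (h z.1) z.2 else 0) + (if r z.1 ≤ 0 then c z else 0)

/-- The surrogate loss `ℓ_Φ(h,r,x,y) = c(x,y)·Φ(r(x)) + L(h(x),y)·Φ(−r(x))`. -/
noncomputable def absSur {X : Type*} (L : ℝ → ℝ → ℝ) (c : X × ℝ → ℝ) (Φ : ℝ → ℝ)
    (h : X → ℝ) (r : X → ℝ) (z : X × ℝ) : ℝ :=
  c z * Φ (r z.1) + L (h z.1) z.2 * Φ (-r z.1)

/-- Generalization error of a nonnegative loss, as a Lebesgue integral in `[0,∞]`. -/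
noncomputable def genErr {W : Type*} [MeasurableSpace W] (μ : Measure W) (f : W → ℝ) : ℝ≥0∞ :=
  ∫⁻ w, ENNReal.ofReal (f w) ∂μ

/-- Binary zero-one generalization error `E_{ℓ01}(r)`. -/
noncomputable def E01bin {X : Type*} [MeasurableSpace X]
    (ν : Measure (X × PMOne)) (r : X → ℝ) : ℝ≥0∞ :=
  ν {z | sgn (r z.1) ≠ (z.2 : ℝ)}

/-- Binary margin-based surrogate generalization error `E_Φ(r)`. -/
noncomputable def EPhiBin {X : Type*} [MeasurableSpace X]
    (Φ : ℝ → ℝ) (ν : Measure (X × PMOne)) (r : X → ℝ) : ℝ≥0∞ :=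
  ∫⁻ z, ENNReal.ofReal (Φ ((z.2 : ℝ) * r z.1)) ∂ν

/-!
For a fixed predictor `h`, deferral is cost-sensitive binary classification: place mass `c(x,y)` on
`(x, +1)` and mass `L(h(x),y)` on `(x, −1)`. Under this finite measure of mass at most `l̄ + c̄` the
zero-one error of `r` is its deferral error and the margin error its surrogate error. Normalising to
a probability measure, applying the assumed bound and scaling back costs the factor
`(l̄ + c̄)^(1 - α)`, since one side is homogeneous of degree one and the other of degree `α`.

To pass from the best rejector for `h` to the best pair `(h', r')`, compare `h` with the predictor
that equals `h'` where `r'` accepts and `h` elsewhere: replacing `h` by `h'` in the deferral error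
saves exactly as much as replacing `h` by this predictor in the prediction error.
-/

/-- The excess error `F(f) − F*` of `f`, where `F*` is the infimum of the error functional `F` over
all measurable functions. The subtraction is truncated, so the value is `0` when `F* = ∞`. -/
noncomputable def excess {X Y : Type*} [MeasurableSpace X] [MeasurableSpace Y]
    (F : (X → Y) → ℝ≥0∞) (f : X → Y) : ℝ≥0∞ :=
  F f - ⨅ (g : X → Y) (_ : Measurable g), F g

section Excess

variable {X Y : Type*} [MeasurableSpace X] [MeasurableSpace Y]

theorem excess_congr {F G : (X → Y) → ℝ≥0∞} (hFG : ∀ f, Measurable f → F f = G f)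
    {f : X → Y} (hf : Measurable f) : excess F f = excess G f := by
  rw [excess, excess, hFG f hf, iInf_congr fun g => iInf_congr (hFG g)]

theorem excess_const_mul (F : (X → Y) → ℝ≥0∞) {a : ℝ≥0∞} (ha₀ : a ≠ 0) (ha : a ≠ ∞)
    (f : X → Y) : excess (fun g => a * F g) f = a * excess F f := by
  simp only [excess, ENNReal.mul_sub fun _ _ => ha, ENNReal.mul_iInf_of_ne ha₀ ha]

end Excess

section FiniteMeasure

variable {X : Type*} [MeasurableSpace X]

theorem E01bin_smul (a : ℝ≥0∞) (ν : Measure (X × PMOne)) (r : X → ℝ) :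
    E01bin (a • ν) r = a * E01bin ν r :=
  rfl

theorem EPhiBin_smul (Φ : ℝ → ℝ) (a : ℝ≥0∞) (ν : Measure (X × PMOne)) (r : X → ℝ) :
    EPhiBin Φ (a • ν) r = a * EPhiBin Φ ν r :=
  lintegral_smul_measure ..

theorem excess_E01bin_smul {a : ℝ≥0∞} (ha₀ : a ≠ 0) (ha : a ≠ ∞) (ν : Measure (X × PMOne))
    (r : X → ℝ) : excess (E01bin (a • ν)) r = a * excess (E01bin ν) r := by
  rw [← excess_const_mul _ ha₀ ha, funext (E01bin_smul a ν)]

theorem excess_EPhiBin_smul (Φ : ℝ → ℝ) {a : ℝ≥0∞} (ha₀ : a ≠ 0) (ha : a ≠ ∞)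
    (ν : Measure (X × PMOne)) (r : X → ℝ) :
    excess (EPhiBin Φ (a • ν)) r = a * excess (EPhiBin Φ ν) r := by
  rw [← excess_const_mul _ ha₀ ha, funext (EPhiBin_smul Φ a ν)]

theorem ennreal_mul_mul_inv_mul_rpow {m : ℝ≥0∞} (hm₀ : m ≠ 0) (hm : m ≠ ∞) {α : ℝ} (hα : 0 ≤ α)
    (β d : ℝ≥0∞) : m * (β * (m⁻¹ * d) ^ α) = m ^ (1 - α) * β * d ^ α := by
  rw [ENNReal.mul_rpow_of_nonneg _ _ hα, ENNReal.inv_rpow, ← ENNReal.rpow_neg,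
    sub_eq_add_neg, ENNReal.rpow_add _ _ hm₀ hm, ENNReal.rpow_one]
  ring

theorem excess_E01bin_le_of_isFiniteMeasure {Φ : ℝ → ℝ} {α : ℝ} (hα : 0 ≤ α) {β : ℝ≥0∞}
    {r : X → ℝ}
    (hcons : ∀ ν : Measure (X × PMOne), IsProbabilityMeasure ν →
      excess (E01bin ν) r ≤ β * excess (EPhiBin Φ ν) r ^ α)
    (ρ : Measure (X × PMOne)) [IsFiniteMeasure ρ] :
    excess (E01bin ρ) r ≤ ρ Set.univ ^ (1 - α) * β * excess (EPhiBin Φ ρ) r ^ α := by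
  rcases eq_zero_or_neZero ρ with rfl | _
  · simp [excess, E01bin]
  set m := ρ Set.univ
  have hm₀ : m ≠ 0 := NeZero.ne _
  have hm : m ≠ ∞ := measure_ne_top ρ _
  have hm₀' : m⁻¹ ≠ 0 := ENNReal.inv_ne_zero.2 hm
  have hm' : m⁻¹ ≠ ∞ := ENNReal.inv_ne_top.2 hm₀
  have normalized : m⁻¹ * excess (E01bin ρ) r ≤ β * (m⁻¹ * excess (EPhiBin Φ ρ) r) ^ α := by
    rw [← excess_E01bin_smul hm₀' hm', ← excess_EPhiBin_smul Φ hm₀' hm']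
    exact hcons (m⁻¹ • ρ) isProbabilityMeasureSMul
  calc excess (E01bin ρ) r = m * (m⁻¹ * excess (E01bin ρ) r) := by
        rw [← mul_assoc, ENNReal.mul_inv_cancel hm₀ hm, one_mul]
    _ ≤ m * (β * (m⁻¹ * excess (EPhiBin Φ ρ) r) ^ α) := by gcongr
    _ = m ^ (1 - α) * β * excess (EPhiBin Φ ρ) r ^ α :=
        ennreal_mul_mul_inv_mul_rpow hm₀ hm hα β _

end FiniteMeasure

/-- The label `+1`. -/
def posLabel : PMOne := ⟨1, Or.inr rfl⟩

/-- The label `−1`. -/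
def negLabel : PMOne := ⟨-1, Or.inl rfl⟩

/-- The unnormalised binary distribution of a cost-sensitive problem: a point `(x, y)` contributes
mass `a(x,y)` to `(x, +1)` and mass `b(x,y)` to `(x, −1)`, so that `a` is the cost of predicting
`−1` and `b` the cost of predicting `+1`. -/
noncomputable def costMeasure {X Y : Type*} [MeasurableSpace X] [MeasurableSpace Y]
    (μ : Measure (X × Y)) (a b : X × Y → ℝ≥0∞) : Measure (X × PMOne) :=
  (μ.withDensity a).map (fun z => (z.1, posLabel)) +
    (μ.withDensity b).map (fun z => (z.1, negLabel))

section CostMeasure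

variable {X Y : Type*} [MeasurableSpace X] [MeasurableSpace Y] {a b : X × Y → ℝ≥0∞}

theorem lintegral_costMeasure (μ : Measure (X × Y)) (ha : Measurable a) (hb : Measurable b)
    {g : X × PMOne → ℝ≥0∞} (hg : Measurable g) :
    ∫⁻ w, g w ∂costMeasure μ a b =
      ∫⁻ z, (a z * g (z.1, posLabel) + b z * g (z.1, negLabel)) ∂μ := by
  have hpos : Measurable fun z : X × Y => (z.1, posLabel) := by fun_prop
  have hneg : Measurable fun z : X × Y => (z.1, negLabel) := by fun_prop
  calc ∫⁻ w, g w ∂costMeasure μ a b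
      = ∫⁻ z, g (z.1, posLabel) ∂μ.withDensity a + ∫⁻ z, g (z.1, negLabel) ∂μ.withDensity b := by
        rw [costMeasure, lintegral_add_measure, lintegral_map hg hpos, lintegral_map hg hneg]
    _ = ∫⁻ z, a z * g (z.1, posLabel) ∂μ + ∫⁻ z, b z * g (z.1, negLabel) ∂μ :=
        congrArg₂ (· + ·) (lintegral_withDensity_eq_lintegral_mul μ ha (hg.comp hpos))
          (lintegral_withDensity_eq_lintegral_mul μ hb (hg.comp hneg))
    _ = ∫⁻ z, (a z * g (z.1, posLabel) + b z * g (z.1, negLabel)) ∂μ :=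
        (lintegral_add_left (ha.mul (hg.comp hpos)) _).symm

theorem costMeasure_univ (μ : Measure (X × Y)) (ha : Measurable a) (hb : Measurable b) :
    costMeasure μ a b Set.univ = ∫⁻ z, (a z + b z) ∂μ := by
  rw [← lintegral_one, lintegral_costMeasure μ ha hb measurable_const]
  simp only [mul_one]

theorem measurable_sgn : Measurable sgn :=
  Measurable.ite measurableSet_Ioi measurable_const measurable_const

theorem E01bin_costMeasure (μ : Measure (X × Y)) (ha : Measurable a) (hb : Measurable b)
    {r : X → ℝ} (hr : Measurable r) :
    E01bin (costMeasure μ a b) r = ∫⁻ z, (if 0 < r z.1 then b z else a z) ∂μ := by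
  have herr : MeasurableSet {w : X × PMOne | sgn (r w.1) ≠ w.2} :=
    (measurableSet_eq_fun (measurable_sgn.comp (hr.comp measurable_fst))
      (measurable_subtype_coe.comp measurable_snd)).compl
  rw [E01bin, ← lintegral_indicator_one herr,
    lintegral_costMeasure μ ha hb (measurable_one.indicator herr)]
  refine lintegral_congr fun z => ?_
  by_cases hz : 0 < r z.1 <;> norm_num [Set.indicator, sgn, posLabel, negLabel, hz]

theorem EPhiBin_costMeasure (μ : Measure (X × Y)) (ha : Measurable a) (hb : Measurable b)
    {Φ : ℝ → ℝ} (hΦ : Measurable Φ) {r : X → ℝ} (hr : Measurable r) :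
    EPhiBin Φ (costMeasure μ a b) r =
      ∫⁻ z, (a z * ENNReal.ofReal (Φ (r z.1)) + b z * ENNReal.ofReal (Φ (-r z.1))) ∂μ := by
  have hg : Measurable fun w : X × PMOne => ENNReal.ofReal (Φ ((w.2 : ℝ) * r w.1)) := by
    fun_prop
  rw [EPhiBin, lintegral_costMeasure μ ha hb hg]
  simp only [posLabel, negLabel, one_mul, neg_one_mul]

end CostMeasure

/-- The unnormalised binary distribution attached to deferral with a fixed predictor `h`: rejecting
(label `−1`) costs `c`, accepting (label `+1`) costs the loss of `h`. -/
noncomputable def deferralMeasure {X : Type*} [MeasurableSpace X] (μ : Measure (X × ℝ))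
    (L : ℝ → ℝ → ℝ) (c : X × ℝ → ℝ) (h : X → ℝ) : Measure (X × PMOne) :=
  costMeasure μ (fun z => ENNReal.ofReal (c z)) (fun z => ENNReal.ofReal (L (h z.1) z.2))

theorem absLoss_eq_ite {X : Type*} (L : ℝ → ℝ → ℝ) (c : X × ℝ → ℝ) (h r : X → ℝ) (z : X × ℝ) :
    absLoss L c h r z = if 0 < r z.1 then L (h z.1) z.2 else c z := by
  by_cases hz : 0 < r z.1
  · simp [absLoss, hz, hz.not_ge]
  · simp [absLoss, hz, not_lt.1 hz]

section Deferral

variable {X : Type*} [MeasurableSpace X] {L : ℝ → ℝ → ℝ} {c : X × ℝ → ℝ} {lbar cbar : ℝ}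
  {h r : X → ℝ}

theorem measurable_predictor_loss (hLmeas : Measurable fun p : ℝ × ℝ => L p.1 p.2)
    (hh : Measurable h) : Measurable fun z : X × ℝ => L (h z.1) z.2 :=
  hLmeas.comp ((hh.comp measurable_fst).prodMk measurable_snd)

theorem genErr_absLoss (μ : Measure (X × ℝ)) (hLmeas : Measurable fun p : ℝ × ℝ => L p.1 p.2)
    (hcmeas : Measurable c) (hh : Measurable h) (hr : Measurable r) :
    genErr μ (absLoss L c h r) = E01bin (deferralMeasure μ L c h) r := by
  rw [deferralMeasure, E01bin_costMeasure μ hcmeas.ennreal_ofReal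
    (measurable_predictor_loss hLmeas hh).ennreal_ofReal hr]
  simp only [genErr, absLoss_eq_ite, apply_ite ENNReal.ofReal]

theorem genErr_absSur (μ : Measure (X × ℝ)) (hLmeas : Measurable fun p : ℝ × ℝ => L p.1 p.2)
    (hL : ∀ y' y, 0 ≤ L y' y) (hcmeas : Measurable c) (hc : ∀ z, 0 ≤ c z)
    {Φ : ℝ → ℝ} (hΦmeas : Measurable Φ) (hΦ : ∀ u, 0 ≤ Φ u)
    (hh : Measurable h) (hr : Measurable r) :
    genErr μ (absSur L c Φ h r) = EPhiBin Φ (deferralMeasure μ L c h) r := by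
  rw [deferralMeasure, EPhiBin_costMeasure μ hcmeas.ennreal_ofReal
    (measurable_predictor_loss hLmeas hh).ennreal_ofReal hΦmeas hr]
  refine lintegral_congr fun z => ?_
  rw [absSur, ENNReal.ofReal_add (mul_nonneg (hc z) (hΦ _)) (mul_nonneg (hL _ _) (hΦ _)),
    ENNReal.ofReal_mul (hc z), ENNReal.ofReal_mul (hL _ _)]

theorem deferralMeasure_univ_le (μ : Measure (X × ℝ))
    (hLmeas : Measurable fun p : ℝ × ℝ => L p.1 p.2) (hL : ∀ y' y, L y' y ∈ Set.Icc 0 lbar)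
    (hcmeas : Measurable c) (hc : ∀ z, c z ∈ Set.Icc 0 cbar) (hh : Measurable h) :
    deferralMeasure μ L c h Set.univ ≤ ENNReal.ofReal (lbar + cbar) * μ Set.univ := by
  rw [deferralMeasure, costMeasure_univ μ hcmeas.ennreal_ofReal
    (measurable_predictor_loss hLmeas hh).ennreal_ofReal, ← lintegral_const]
  refine lintegral_mono fun z => ?_
  rw [← ENNReal.ofReal_add (hc z).1 (hL _ _).1, add_comm]
  exact ENNReal.ofReal_le_ofReal (add_le_add (hL _ _).2 (hc z).2)

theorem excess_absLoss_le_excess_absSur (μ : Measure (X × ℝ)) [IsFiniteMeasure μ]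
    (hLmeas : Measurable fun p : ℝ × ℝ => L p.1 p.2) (hL : ∀ y' y, L y' y ∈ Set.Icc 0 lbar)
    (hcmeas : Measurable c) (hc : ∀ z, c z ∈ Set.Icc 0 cbar)
    {Φ : ℝ → ℝ} (hΦmeas : Measurable Φ) (hΦ : ∀ u, 0 ≤ Φ u)
    {α : ℝ} (hα : α ∈ Set.Icc (0 : ℝ) 1) {β : ℝ≥0∞} (hh : Measurable h) (hr : Measurable r)
    (hcons : ∀ ν : Measure (X × PMOne), IsProbabilityMeasure ν →
      excess (E01bin ν) r ≤ β * excess (EPhiBin Φ ν) r ^ α) :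
    excess (fun r' => genErr μ (absLoss L c h r')) r ≤
      (ENNReal.ofReal (lbar + cbar) * μ Set.univ) ^ (1 - α) * β *
        excess (fun r' => genErr μ (absSur L c Φ h r')) r ^ α := by
  set ρ := deferralMeasure μ L c h
  have hmass : ρ Set.univ ≤ ENNReal.ofReal (lbar + cbar) * μ Set.univ :=
    deferralMeasure_univ_le μ hLmeas hL hcmeas hc hh
  have : IsFiniteMeasure ρ :=
    ⟨hmass.trans_lt (ENNReal.mul_lt_top ENNReal.ofReal_lt_top (measure_lt_top μ _))⟩
  rw [excess_congr (fun _ => genErr_absLoss μ hLmeas hcmeas hh) hr,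
    excess_congr (fun _ => genErr_absSur μ hLmeas (fun y' y => (hL y' y).1) hcmeas
      (fun z => (hc z).1) hΦmeas hΦ hh) hr]
  refine (excess_E01bin_le_of_isFiniteMeasure hα.1 hcons ρ).trans ?_
  gcongr
  exact sub_nonneg.2 hα.2

theorem genErr_predictor_loss_ne_top (μ : Measure (X × ℝ)) [IsFiniteMeasure μ]
    (hL : ∀ y' y, L y' y ≤ lbar) (h : X → ℝ) : genErr μ (fun z => L (h z.1) z.2) ≠ ∞ :=
  (IsFiniteMeasure.lintegral_lt_top_of_bounded_to_ennreal μ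
    ⟨lbar.toNNReal, fun z => ENNReal.ofReal_le_ofReal (hL (h z.1) z.2)⟩).ne

theorem genErr_absLoss_le_add_excess (μ : Measure (X × ℝ)) [IsFiniteMeasure μ]
    (hLmeas : Measurable fun p : ℝ × ℝ => L p.1 p.2) (hL : ∀ y' y, L y' y ≤ lbar)
    (hh : Measurable h) {h' : X → ℝ} (hh' : Measurable h') (hr : Measurable r) :
    genErr μ (absLoss L c h r) ≤ genErr μ (absLoss L c h' r) +
      excess (fun k => genErr μ (fun z => L (k z.1) z.2)) h := by
  set EL : (X → ℝ) → ℝ≥0∞ := fun k => genErr μ (fun z => L (k z.1) z.2)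
  let k : X → ℝ := fun x => if 0 < r x then h' x else h x
  have hk : Measurable k := Measurable.ite (measurableSet_lt measurable_const hr) hh' hh
  have exchange :
      genErr μ (absLoss L c h r) + EL k = genErr μ (absLoss L c h' r) + EL h := by
    simp only [EL, genErr]
    rw [← lintegral_add_right _ (measurable_predictor_loss hLmeas hk).ennreal_ofReal,
      ← lintegral_add_right _ (measurable_predictor_loss hLmeas hh).ennreal_ofReal]
    refine lintegral_congr fun z => ?_
    by_cases hz : 0 < r z.1 <;> simp [absLoss_eq_ite, k, hz, add_comm]
  have hEL : EL h ≤ excess EL h + EL k :=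
    le_tsub_add.trans (add_le_add_right (iInf₂_le k hk) (excess EL h))
  refine (ENNReal.add_le_add_iff_right (genErr_predictor_loss_ne_top μ hL k)).1 ?_
  calc genErr μ (absLoss L c h r) + EL k = genErr μ (absLoss L c h' r) + EL h := exchange
    _ ≤ genErr μ (absLoss L c h' r) + (excess EL h + EL k) := by gcongr
    _ = genErr μ (absLoss L c h' r) + excess EL h + EL k := (add_assoc ..).symm

theorem genErr_absLoss_sub_iInf_le_excess_add_excess (μ : Measure (X × ℝ)) [IsFiniteMeasure μ]
    (hLmeas : Measurable fun p : ℝ × ℝ => L p.1 p.2) (hL : ∀ y' y, L y' y ≤ lbar)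
    (hh : Measurable h) (r : X → ℝ) :
    genErr μ (absLoss L c h r)
        - (⨅ (h' : X → ℝ) (_ : Measurable h') (r' : X → ℝ) (_ : Measurable r'),
            genErr μ (absLoss L c h' r'))
      ≤ excess (fun h' => genErr μ (fun z => L (h' z.1) z.2)) h
        + excess (fun r' => genErr μ (absLoss L c h r')) r := by
  set stageOne := excess (fun h' => genErr μ (fun z => L (h' z.1) z.2)) h
  set best := ⨅ (h' : X → ℝ) (_ : Measurable h') (r' : X → ℝ) (_ : Measurable r'),
    genErr μ (absLoss L c h' r')
  set bestRejector := ⨅ (r' : X → ℝ) (_ : Measurable r'), genErr μ (absLoss L c h r')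
  have hbest : bestRejector ≤ best + stageOne := by
    rw [← tsub_le_iff_right]
    refine le_iInf₂ fun h' hh' => le_iInf₂ fun r' hr' => tsub_le_iff_right.2 ?_
    exact (iInf₂_le r' hr').trans (genErr_absLoss_le_add_excess μ hLmeas hL hh hh' hr')
  rw [tsub_le_iff_right]
  calc genErr μ (absLoss L c h r)
      ≤ excess (fun r' => genErr μ (absLoss L c h r')) r + bestRejector := le_tsub_add
    _ ≤ excess (fun r' => genErr μ (absLoss L c h r')) r + (best + stageOne) := by gcongr
    _ = stageOne + excess (fun r' => genErr μ (absLoss L c h r')) r + best := by ring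

theorem single_expert_two_stage_excess_error_bound_general
    (hLmeas : Measurable fun p : ℝ × ℝ => L p.1 p.2) (hL : ∀ y' y, L y' y ∈ Set.Icc 0 lbar)
    (hcmeas : Measurable c) (hc : ∀ z, c z ∈ Set.Icc 0 cbar)
    {Φ : ℝ → ℝ} (hΦmeas : Measurable Φ) (hΦ : ∀ u, 0 ≤ Φ u)
    {α : ℝ} (hα : α ∈ Set.Icc (0 : ℝ) 1) {β : ℝ≥0∞} (hh : Measurable h) (hr : Measurable r)
    (hcons : ∀ ν : Measure (X × PMOne), IsProbabilityMeasure ν →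
      excess (E01bin ν) r ≤ β * excess (EPhiBin Φ ν) r ^ α)
    (μ : Measure (X × ℝ)) [IsFiniteMeasure μ] :
    genErr μ (absLoss L c h r)
        - (⨅ (h' : X → ℝ) (_ : Measurable h') (r' : X → ℝ) (_ : Measurable r'),
            genErr μ (absLoss L c h' r'))
      ≤ excess (fun h' => genErr μ (fun z => L (h' z.1) z.2)) h
        + (ENNReal.ofReal (lbar + cbar) * μ Set.univ) ^ (1 - α) * β *
            excess (fun r' => genErr μ (absSur L c Φ h r')) r ^ α := by
  refine (genErr_absLoss_sub_iInf_le_excess_add_excess μ hLmeas (fun y' y => (hL y' y).2)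
    hh r).trans ?_
  gcongr
  exact excess_absLoss_le_excess_absSur μ hLmeas hL hcmeas hc hΦmeas hΦ hα hh hr hcons

end Deferral

/-- Corollary 5.4: single-expert two-stage excess error bound,
general `Γ`. -/
theorem single_expert_two_stage_excess_error_bound {X : Type*} [MeasurableSpace X]
    (lbar cbar : ℝ) (hlbar : 0 < lbar) (hcbar : 0 < cbar)
    (L : ℝ → ℝ → ℝ) (hLmeas : Measurable fun p : ℝ × ℝ => L p.1 p.2)
    (hL : ∀ y' y, L y' y ∈ Set.Icc 0 lbar)
    (c : X × ℝ → ℝ) (hcmeas : Measurable c) (hc : ∀ z, c z ∈ Set.Ioc 0 cbar)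
    (Φ : ℝ → ℝ) (hΦmeas : Measurable Φ) (hΦmono : Antitone Φ)
    (hΦ0 : ∀ u, 0 ≤ Φ u) (hΦ1 : ∀ u, u ≤ 0 → 1 ≤ Φ u)
    (α β : ℝ) (hα : α ∈ Set.Ioc (0 : ℝ) 1) (hβ : 0 < β)
    (hcons : ∀ ν : Measure (X × PMOne), IsProbabilityMeasure ν →
      ∀ r : X → ℝ, Measurable r →
        E01bin ν r - (⨅ (r' : X → ℝ) (_ : Measurable r'), E01bin ν r')
          ≤ ENNReal.ofReal β *
            (EPhiBin Φ ν r - ⨅ (r' : X → ℝ) (_ : Measurable r'), EPhiBin Φ ν r') ^ α)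
    (μ : Measure (X × ℝ)) [IsProbabilityMeasure μ]
    (h : X → ℝ) (hh : Measurable h) (r : X → ℝ) (hr : Measurable r) :
    genErr μ (absLoss L c h r)
        - (⨅ (h' : X → ℝ) (_ : Measurable h') (r' : X → ℝ) (_ : Measurable r'),
            genErr μ (absLoss L c h' r'))
      ≤ (genErr μ (fun z => L (h z.1) z.2)
            - ⨅ (h' : X → ℝ) (_ : Measurable h'), genErr μ (fun z => L (h' z.1) z.2))
        + ENNReal.ofReal ((lbar + cbar) ^ (1 - α) * β) *
            (genErr μ (absSur L c Φ h r)
              - ⨅ (r' : X → ℝ) (_ : Measurable r'), genErr μ (absSur L c Φ h r')) ^ α := by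
  rw [ENNReal.ofReal_mul (by positivity), ← ENNReal.ofReal_rpow_of_pos (add_pos hlbar hcbar)]
  simpa only [measure_univ, mul_one, excess] using
    single_expert_two_stage_excess_error_bound_general hLmeas hL hcmeas
      (fun z => Set.Ioc_subset_Icc_self (hc z)) hΦmeas hΦ0 (Set.Ioc_subset_Icc_self hα) hh hr
      (fun ν hν => hcons ν hν r hr) μ
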